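/- Let A = Λ_K(Y₁,…,Yₛ) be the exterior algebra over a field K and f a nonzero element of the augmentation ideal whose basement consists of sets L₁,…,L_t with pairwise empty intersections (so ind(f) = t) and each |Lᵢ| ≥ t. Then max{|L| : Y^L ∉ Af} = s − t, i.e., Ksdim₁(A/Af) = s − t. -/

import Mathlib

open ExteriorAlgebra

/-- The monomial `Y^L = ∏_{i ∈ L} Yᵢ` in the exterior algebra `Λ_K(Y₁,…,Yₛ)`,
the product being taken in increasing order of indices. -/
noncomputable def Ymon (K : Type*) [Field K] (s : ℕ) (L : Finset (Fin s)) :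
    ExteriorAlgebra K (Fin s → K) :=
  ((L.sort (· ≤ ·)).map (fun i => ι K (Pi.single i (1 : K)))).prod

/-- The two-sided ideal `AfA` generated by `f`. -/
def idealOf {A : Type*} [Ring A] (f : A) : Ideal A :=
  Ideal.span {x : A | ∃ a b : A, x = a * f * b}

/-- `L` belongs to the basement of `f = Σ c_L Y^L`: it is a minimal element of
`Exp(f) = {L | c_L ≠ 0}`. -/
def InBasement {K : Type*} [Field K] {s : ℕ}
    (c : Finset (Fin s) → K) (L : Finset (Fin s)) : Prop :=
  c L ≠ 0 ∧ ∀ L', c L' ≠ 0 → L' ⊆ L → L' = L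

theorem ysingle_anticomm (K : Type*) [Field K] (s : ℕ) (i j : Fin s) :
    ι K (Pi.single i (1 : K) : Fin s → K) * ι K (Pi.single j (1 : K)) =
      - (ι K (Pi.single j (1 : K) : Fin s → K) * ι K (Pi.single i (1 : K))) := by
  exact eq_neg_of_add_eq_zero_left (ExteriorAlgebra.ι_add_mul_swap _ _)

theorem prod_perm (K : Type*) [Field K] (s : ℕ) {l l' : List (Fin s)} (h : l.Perm l') :
    (l.map (fun i => ι K (Pi.single i (1 : K) : Fin s → K))).prod =
      (l'.map (fun i => ι K (Pi.single i (1 : K) : Fin s → K))).prod ∨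
    (l.map (fun i => ι K (Pi.single i (1 : K) : Fin s → K))).prod =
      -(l'.map (fun i => ι K (Pi.single i (1 : K) : Fin s → K))).prod := by
  induction h with
  | nil => left; rfl
  | cons x _ ih =>
    simp only [List.map_cons, List.prod_cons]
    rcases ih with ih | ih
    · left; rw [ih]
    · right; rw [ih, mul_neg]
  | swap x y l =>
    right
    simp only [List.map_cons, List.prod_cons]
    rw [← mul_assoc, ysingle_anticomm, neg_mul, mul_assoc]
  | trans _ _ ih1 ih2 =>
    rcases ih1 with ih1 | ih1 <;> rcases ih2 with ih2 | ih2 <;> rw [ih1, ih2] <;> simp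

theorem ymon_mul_disjoint (K : Type*) [Field K] (s : ℕ) {A B : Finset (Fin s)}
    (h : Disjoint A B) :
    Ymon K s A * Ymon K s B = Ymon K s (A ∪ B) ∨
      Ymon K s A * Ymon K s B = - Ymon K s (A ∪ B) := by
  unfold Ymon
  rw [← List.prod_append, ← List.map_append]
  apply prod_perm
  rw [List.perm_ext_iff_of_nodup]
  · intro a; simp
  · rw [List.nodup_append']
    refine ⟨Finset.sort_nodup _ _, Finset.sort_nodup _ _, ?_⟩
    intro a ha hb
    rw [Finset.mem_sort] at ha hb
    exact Finset.disjoint_left.mp h ha hb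
  · exact Finset.sort_nodup _ _

theorem ymon_mul_not_disjoint (K : Type*) [Field K] (s : ℕ) {A B : Finset (Fin s)}
    (h : ¬ Disjoint A B) : Ymon K s A * Ymon K s B = 0 := by
  rw [Finset.not_disjoint_iff] at h
  obtain ⟨a, ha, hb⟩ := h
  unfold Ymon
  have h1 : (A.sort (· ≤ ·)).Perm ((A.sort (· ≤ ·)).erase a ++ [a]) :=
    (List.perm_cons_erase ((Finset.mem_sort _).mpr ha)).trans
      (List.perm_append_comm (l₁ := [a]))
  have h2 : (B.sort (· ≤ ·)).Perm (a :: (B.sort (· ≤ ·)).erase a) :=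
    List.perm_cons_erase ((Finset.mem_sort _).mpr hb)
  have key : ∀ x y : ExteriorAlgebra K (Fin s → K),
      x * ι K (Pi.single a (1 : K)) * (ι K (Pi.single a (1 : K)) * y) = 0 := by
    intro x y
    rw [mul_assoc, ← mul_assoc (ι K _), ExteriorAlgebra.ι_sq_zero, zero_mul, mul_zero]
  rcases prod_perm K s h1 with e1 | e1 <;> rcases prod_perm K s h2 with e2 | e2 <;>
    rw [e1, e2] <;> simp [key]

theorem ymon_ne_zero (K : Type*) [Field K] (s : ℕ) (L : Finset (Fin s)) :
    Ymon K s L ≠ 0 := by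
  intro h0
  have e : Ymon K s L = ιMulti K L.card
      (fun k => (Pi.single (L.orderEmbOfFin rfl k) (1 : K) : Fin s → K)) := by
    rw [ιMulti_apply]
    unfold Ymon
    congr 1
    apply List.ext_getElem
    · simp
    · intro n h1 h2
      simp [Finset.orderEmbOfFin_apply]
  let g : (Fin s → K) [⋀^Fin L.card]→ₗ[K] K :=
    (Matrix.detRowAlternating (R := K) (n := Fin L.card)).compLinearMap
      (LinearMap.funLeft K K (L.orderEmbOfFin rfl))
  have h2 : g (fun k => (Pi.single (L.orderEmbOfFin rfl k) (1 : K) : Fin s → K)) = 1 := by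
    have : (fun k => LinearMap.funLeft K K (L.orderEmbOfFin rfl)
        (Pi.single (L.orderEmbOfFin rfl k) (1 : K) : Fin s → K)) =
        (1 : Matrix (Fin L.card) (Fin L.card) K) := by
      ext i j
      simp [LinearMap.funLeft_apply, Matrix.one_apply, Pi.single_apply, eq_comm]
    change Matrix.det (fun k => LinearMap.funLeft K K (L.orderEmbOfFin rfl)
        (Pi.single (L.orderEmbOfFin rfl k) (1 : K) : Fin s → K)) = 1
    rw [this, Matrix.det_one]
  have h3 := liftAlternating_apply_ιMulti (R := K)
    (Pi.single L.card g : (i : ℕ) → (Fin s → K) [⋀^Fin i]→ₗ[K] K)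
    (fun k => (Pi.single (L.orderEmbOfFin rfl k) (1 : K) : Fin s → K))
  rw [← e, h0, map_zero, Pi.single_eq_same, h2] at h3
  exact zero_ne_one h3

theorem exists_basement {K : Type*} [Field K] {s : ℕ} (c : Finset (Fin s) → K)
    (L : Finset (Fin s)) (h : c L ≠ 0) : ∃ B, InBasement c B ∧ B ⊆ L := by
  induction L using Finset.strongInduction with
  | H L ih =>
    by_cases hb : InBasement c L
    · exact ⟨L, hb, subset_rfl⟩
    · unfold InBasement at hb
      push Not at hb
      obtain ⟨L', h1, h2, h3⟩ := hb h
      obtain ⟨B, hB, hs⟩ := ih L' (lt_of_le_of_ne h2 h3) h1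
      exact ⟨B, hB, hs.trans h2⟩

theorem upper {K : Type*} [Field K] (s : ℕ) (c : Finset (Fin s) → K)
    (f : ExteriorAlgebra K (Fin s → K))
    (hf : f = ∑ L : Finset (Fin s), c L • Ymon K s L)
    (t : ℕ) (hcard : {L : Finset (Fin s) | InBasement c L}.ncard = t)
    (hdisj : ∀ L L' : Finset (Fin s), InBasement c L → InBasement c L' →
      L ≠ L' → L ∩ L' = ∅)
    (hbig : ∀ L : Finset (Fin s), InBasement c L → t ≤ L.card) :
    ∀ M L : Finset (Fin s), M = Lᶜ → M.card < t → Ymon K s L ∈ idealOf f := by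
  classical
  intro M
  induction M using Finset.strongInduction with
  | H M ih =>
  intro L hM hlt
  have hex : ∃ B, InBasement c B ∧ B ⊆ L := by
    by_contra hno
    push Not at hno
    have hch : ∀ B, ∃ x, InBasement c B → x ∈ B ∧ x ∈ M := by
      intro B
      by_cases hB : InBasement c B
      · obtain ⟨x, hx, hx'⟩ := Finset.not_subset.mp (hno B hB)
        exact ⟨x, fun _ => ⟨hx, by simp [hM, hx']⟩⟩
      · have : t ≠ 0 := by omega
        rw [← hcard] at this
        obtain ⟨B', hB'⟩ := Set.nonempty_of_ncard_ne_zero this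
        obtain ⟨x, hx, hx'⟩ := Finset.not_subset.mp (hno B' hB')
        exact ⟨x, fun h => absurd h hB⟩
    choose g hg using hch
    have : {L : Finset (Fin s) | InBasement c L}.ncard ≤ (M : Set (Fin s)).ncard := by
      apply Set.ncard_le_ncard_of_injOn g
      · intro B hB; exact (hg B hB).2
      · intro B hB B' hB' he
        by_contra hne
        have := hdisj B B' hB hB' hne
        have hx : g B ∈ B ∩ B' :=
          Finset.mem_inter.mpr ⟨(hg B hB).1, he ▸ (hg B' hB').1⟩
        rw [this] at hx
        simp at hx
    rw [Set.ncard_coe_finset] at this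
    omega
  obtain ⟨B, hB, hBL⟩ := hex
  have hmem : Ymon K s (L \ B) * f ∈ idealOf f := by
    apply Ideal.subset_span
    exact ⟨_, 1, by rw [mul_one]⟩
  have hterm : ∀ L' ∈ Finset.univ.erase B,
      Ymon K s (L \ B) * (c L' • Ymon K s L') ∈ idealOf f := by
    intro L' hL'
    have hne : L' ≠ B := Finset.ne_of_mem_erase hL'
    rw [mul_smul_comm]
    by_cases hc : c L' = 0
    · rw [hc, zero_smul]; exact zero_mem _
    rw [Algebra.smul_def]
    apply Ideal.mul_mem_left
    by_cases hd : Disjoint (L \ B) L'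
    swap
    · rw [ymon_mul_not_disjoint K s hd]; exact zero_mem _
    obtain ⟨B', hB', hs⟩ := exists_basement c L' hc
    have hBB : B' = B := by
      by_contra hn
      have h1 := hdisj B' B hB' hB hn
      have h2 : B' ⊆ M := by
        intro x hx
        rw [hM, Finset.mem_compl]
        intro hxL
        have hxB : x ∉ B := fun hxB => by
          have : x ∈ B' ∩ B := Finset.mem_inter.mpr ⟨hx, hxB⟩
          rw [h1] at this
          simp at this
        exact Finset.disjoint_left.mp hd (Finset.mem_sdiff.mpr ⟨hxL, hxB⟩) (hs hx)
      have := Finset.card_le_card h2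
      have := hbig B' hB'
      omega
    subst hBB
    obtain ⟨x, hx, hxB⟩ := Finset.exists_of_ssubset (lt_of_le_of_ne hs (Ne.symm hne))
    have hxL : x ∉ L := fun hxL =>
      Finset.disjoint_left.mp hd (Finset.mem_sdiff.mpr ⟨hxL, hxB⟩) hx
    have hss : (L \ B' ∪ L')ᶜ ⊂ M := by
      rw [hM, Finset.ssubset_iff_of_subset]
      · exact ⟨x, by simpa using hxL, by simp [hx]⟩
      · intro y hy
        simp only [Finset.mem_compl, Finset.mem_union, Finset.mem_sdiff] at hy ⊢
        intro hyL
        apply hy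
        by_cases hyB : y ∈ B'
        · exact Or.inr (hs hyB)
        · exact Or.inl ⟨hyL, hyB⟩
    have hI := ih _ hss (L \ B' ∪ L') rfl (lt_of_le_of_lt (Finset.card_le_card hss.1) hlt)
    rcases ymon_mul_disjoint K s hd with e | e <;> rw [e]
    · exact hI
    · exact neg_mem hI
  have hexp : Ymon K s (L \ B) * f = Ymon K s (L \ B) * (c B • Ymon K s B) +
      ∑ L' ∈ Finset.univ.erase B, Ymon K s (L \ B) * (c L' • Ymon K s L') := by
    conv_lhs => rw [hf, Finset.mul_sum]
    exact (Finset.add_sum_erase _ _ (Finset.mem_univ B)).symm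
  rw [hexp] at hmem
  have hmain := (Submodule.add_mem_iff_left _ (Submodule.sum_mem _ hterm)).mp hmem
  have h4 : Ymon K s (L \ B) * Ymon K s B ∈ idealOf f := by
    have := Ideal.mul_mem_left _ (algebraMap K _ (c B)⁻¹) hmain
    rwa [← Algebra.smul_def, mul_smul_comm, smul_smul, inv_mul_cancel₀ hB.1, one_smul] at this
  have hu : L \ B ∪ B = L := Finset.sdiff_union_of_subset hBL
  rcases ymon_mul_disjoint K s (Finset.sdiff_disjoint (s := B) (t := L)) with e | e <;>
    rw [e, hu] at h4
  · exact h4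
  · exact neg_mem_iff.mp h4

theorem lower {K : Type*} [Field K] (s : ℕ) (c : Finset (Fin s) → K)
    (f : ExteriorAlgebra K (Fin s → K))
    (hf : f = ∑ L : Finset (Fin s), c L • Ymon K s L)
    (M : Finset (Fin s)) (hM : ∀ B, InBasement c B → ∃ x ∈ B, x ∈ M) :
    Ymon K s Mᶜ ∉ idealOf f := by
  classical
  let φ : (Fin s → K) →ₗ[K] (Fin s → K) :=
    LinearMap.pi (fun i => if i ∈ M then 0 else LinearMap.proj i)
  have hφ1 : ∀ i ∈ M, φ (Pi.single i (1 : K)) = 0 := by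
    intro i hi
    ext j
    simp only [φ, LinearMap.pi_apply]
    split_ifs with hj
    · simp
    · have : j ≠ i := fun h => hj (h ▸ hi)
      simp [this]
  have hφ2 : ∀ i ∉ M, φ (Pi.single i (1 : K)) = Pi.single i (1 : K) := by
    intro i hi
    ext j
    simp only [φ, LinearMap.pi_apply]
    split_ifs with hj
    · have : j ≠ i := fun h => hi (h ▸ hj)
      simp [this]
    · simp
  have hmap : ∀ L : Finset (Fin s), ExteriorAlgebra.map φ (Ymon K s L) =
      ((L.sort (· ≤ ·)).map (fun i => ι K (φ (Pi.single i (1 : K))))).prod := by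
    intro L
    unfold Ymon
    rw [map_list_prod, List.map_map]
    congr 1
    apply List.map_congr_left
    intro i _
    simp
  have hf0 : ExteriorAlgebra.map φ f = 0 := by
    rw [hf, map_sum]
    apply Finset.sum_eq_zero
    intro L _
    rw [map_smul]
    by_cases hc : c L = 0
    · rw [hc, zero_smul]
    obtain ⟨B, hB, hs⟩ := exists_basement c L hc
    obtain ⟨x, hx, hxM⟩ := hM B hB
    rw [hmap, List.prod_eq_zero, smul_zero]
    rw [List.mem_map]
    exact ⟨x, (Finset.mem_sort _).mpr (hs hx), by rw [hφ1 x hxM, map_zero]⟩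
  have hY : ExteriorAlgebra.map φ (Ymon K s Mᶜ) = Ymon K s Mᶜ := by
    rw [hmap]
    unfold Ymon
    congr 1
    apply List.map_congr_left
    intro i hi
    rw [Finset.mem_sort, Finset.mem_compl] at hi
    rw [hφ2 i hi]
  intro hmem
  have hle : idealOf f ≤ RingHom.ker (ExteriorAlgebra.map φ) := by
    unfold idealOf
    rw [Ideal.span_le]
    rintro _ ⟨a, b, rfl⟩
    simp [RingHom.mem_ker, hf0]
  have := hle hmem
  rw [RingHom.mem_ker, hY] at this
  exact ymon_ne_zero K s _ this

/-- Let `f = Σ_L c_L Y^L ∈ Λ_K(Y₁,…,Yₛ)` be nonzero with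
`c_∅ = 0`, whose basement consists of `t` pairwise disjoint sets, each of
cardinality at least `t` (so `ind(f) = t`).  Then
`Ksdim₁(A/Af) = max{|L| : Y^L ∉ Af} = s - t`. -/
theorem odd_dim_one_relation_worst_case
    {K : Type*} [Field K] (s : ℕ) (c : Finset (Fin s) → K) (hc0 : c ∅ = 0)
    (f : ExteriorAlgebra K (Fin s → K))
    (hf : f = ∑ L : Finset (Fin s), c L • Ymon K s L) (hfne : f ≠ 0)
    (t : ℕ) (hcard : {L : Finset (Fin s) | InBasement c L}.ncard = t)
    (hdisj : ∀ L L' : Finset (Fin s), InBasement c L → InBasement c L' →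
      L ≠ L' → L ∩ L' = ∅)
    (hbig : ∀ L : Finset (Fin s), InBasement c L → t ≤ L.card) :
    sSup {n : ℕ | ∃ L : Finset (Fin s),
      L.card = n ∧ Ymon K s L ∉ idealOf f} = s - t := by

  classical
  have hch : ∀ B, ∃ x : Option (Fin s), InBasement c B → ∃ y ∈ B, x = some y := by
    intro B
    by_cases hB : InBasement c B
    · have hne : B.Nonempty := by
        rw [Finset.nonempty_iff_ne_empty]
        rintro rfl
        exact hB.1 hc0
      obtain ⟨y, hy⟩ := hne
      exact ⟨some y, fun _ => ⟨y, hy, rfl⟩⟩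
    · exact ⟨none, fun h => absurd h hB⟩
  choose g hg using hch
  let M : Finset (Fin s) := Finset.univ.filter (fun y => ∃ B, InBasement c B ∧ g B = some y)
  have hMt : M.card = t := by
    rw [← hcard]
    have h1 : Set.image some (M : Set (Fin s)) = Set.image g {L : Finset (Fin s) | InBasement c L} := by
      ext x
      constructor
      · rintro ⟨y, hy, rfl⟩
        obtain ⟨B, hB, e⟩ := (Finset.mem_filter.mp hy).2
        exact ⟨B, hB, e⟩
      · rintro ⟨B, hB, rfl⟩
        obtain ⟨y, hy, e⟩ := hg B hB
        exact ⟨y, Finset.mem_filter.mpr ⟨Finset.mem_univ _, B, hB, e⟩, e.symm⟩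
    have h2 : (Set.image g {L : Finset (Fin s) | InBasement c L}).ncard =
        {L : Finset (Fin s) | InBasement c L}.ncard := by
      apply Set.InjOn.ncard_image
      intro B hB B' hB' he
      by_contra hne
      obtain ⟨y, hy, e⟩ := hg B hB
      obtain ⟨y', hy', e'⟩ := hg B' hB'
      have hyy : y = y' := by
        apply Option.some_injective
        rw [← e, ← e', he]
      subst hyy
      have hx : y ∈ B ∩ B' := Finset.mem_inter.mpr ⟨hy, hy'⟩
      rw [hdisj B B' hB hB' hne] at hx
      simp at hx
    rw [← h2, ← h1, Set.ncard_image_of_injective _ (Option.some_injective _),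
      Set.ncard_coe_finset]
  have hlow : Ymon K s Mᶜ ∉ idealOf f := by
    apply lower s c f hf
    intro B hB
    obtain ⟨y, hy, e⟩ := hg B hB
    exact ⟨y, hy, Finset.mem_filter.mpr ⟨Finset.mem_univ _, B, hB, e⟩⟩
  have hgreat : IsGreatest {n : ℕ | ∃ L : Finset (Fin s),
      L.card = n ∧ Ymon K s L ∉ idealOf f} (s - t) := by
    constructor
    · exact ⟨Mᶜ, by rw [Finset.card_compl, hMt, Fintype.card_fin], hlow⟩
    · rintro n ⟨L, rfl, hL⟩
      by_contra hlt
      apply hL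
      apply upper s c f hf t hcard hdisj hbig Lᶜ L rfl
      rw [Finset.card_compl, Fintype.card_fin]
      have h5 : L.card ≤ s := by simpa using Finset.card_le_univ L
      omega
  exact hgreat.csSup_eq
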